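/- Let m, n be integers and q a prime power with n + q → ∞, m constant, and 2m < n. Let t → ∞ be any function of the instance. Let 𝓕 be the family of all m-flats in F_q^n, and set ℓ = q^m (the number of points in an m-flat). Let X be the random subset of F_q^n in which each point is included independently with probability θ, and let Γ be the event that some m-flat is entirely contained in X. Then: (1) if θ < (|𝓕|·t)^{−1/ℓ}, then Pr[Γ] → 0; and (2) if θ > (|𝓕|·t^{−1})^{−1/ℓ}, then Pr[Γ] → 1. -/

import Mathlib

open Filter Asymptotics

noncomputable def prRandomSubset {α : Type*} (U : Finset α) (θ : ℝ)
    (E : Finset α → Prop) : ℝ :=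
  ∑ A ∈ U.powerset,
    @ite ℝ (E A) (Classical.propDecidable _)
      (θ ^ A.card * (1 - θ) ^ (U.card - A.card)) 0

def IsFlat (K : Type*) {V : Type*} [Field K] [AddCommGroup V] [Module K V]
    (m : ℕ) (S : Set V) : Prop :=
  ∃ W : Submodule K V, Module.finrank K W = m ∧ ∃ v : V, S = (v + ·) '' (W : Set V)

/-!
The expected number of `m`-flats contained in `X` is `N θ ^ ℓ`, where `N` is the number of `m`-flats
and `ℓ = q ^ m`; below the threshold it is at most `1 / t`, and Markov's inequality applies. Above
the threshold, Chebyshev's inequality bounds the probability that `X` contains no `m`-flat by the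
average of `θ ^ (-|S ∩ T|) - 1` over the pairs of `m`-flats `S`, `T`. Disjoint pairs contribute
nothing, and pairs with `S = T` contribute at most `θ ^ (-ℓ) / N < 1 / t`.

The remaining pairs intersect in a `k`-flat for some `k < m`. Since the affine group is transitive
on affine frames of `k`-flats, counting the frames shared by `S` and `T` shows that, for fixed `S`,
the proportion of such `T` is at most `2 ^ k * q ^ ((2 * m - n) * (k + 1))`. On the other hand
`N ≤ q ^ (n * (m + 1))` gives `θ ^ (-q ^ k) ≤ (q ^ (n * (m + 1)) / t) ^ (1 / q ^ (m - k))`.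
If `q` is large, this is at most `exp (n * s)` with `s = (m + 1) * log q / q` close to `0`: it is
close to `1` when `n ≤ 2 * m`, and it is beaten by the proportion when `n > 2 * m`. If `q` is
bounded, then `m + 1 ≤ (k + 1) * q ^ (m - k)` makes the powers of `q ^ n` cancel, and the
contribution is `O(t ^ (-1 / q ^ (m - k)))`.
-/

open Finset Module

section RandomSubset

variable {α : Type*} [Fintype α]

/-- The expectation of `f X`, where `X` is the random subset of `α` containing each point
independently with probability `θ`, as a linear functional of `f`, used to compute moments. -/
noncomputable def randomSubsetExpectation (θ : ℝ) : (Finset α → ℝ) →ₗ[ℝ] ℝ :=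
  ∑ A : Finset α, (θ ^ #A * (1 - θ) ^ (Fintype.card α - #A)) • LinearMap.proj A

lemma randomSubsetExpectation_apply (θ : ℝ) (f : Finset α → ℝ) :
    randomSubsetExpectation θ f = ∑ A, θ ^ #A * (1 - θ) ^ (Fintype.card α - #A) * f A := by
  simp [randomSubsetExpectation, LinearMap.sum_apply]

lemma prRandomSubset_univ_eq_randomSubsetExpectation (θ : ℝ) (E : Finset α → Prop) :
    prRandomSubset univ θ E = randomSubsetExpectation θ ({A | E A}.indicator 1) := by
  classical
  simp [prRandomSubset, randomSubsetExpectation_apply, Set.indicator_apply]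

lemma randomSubsetExpectation_mono {θ : ℝ} (h0 : 0 ≤ θ) (h1 : θ ≤ 1) {f g : Finset α → ℝ}
    (hfg : f ≤ g) : randomSubsetExpectation θ f ≤ randomSubsetExpectation θ g := by
  simp only [randomSubsetExpectation_apply]
  exact sum_le_sum fun A _ => mul_le_mul_of_nonneg_left (hfg A)
    (mul_nonneg (pow_nonneg h0 _) (pow_nonneg (sub_nonneg.2 h1) _))

lemma randomSubsetExpectation_indicator_Ici (θ : ℝ) (S : Finset α) :
    randomSubsetExpectation θ ((Set.Ici S).indicator 1) = θ ^ #S := by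
  classical
  have hdisj : ∀ B ∈ Sᶜ.powerset, Disjoint S B := fun B hB =>
    disjoint_compl_right.mono_right (mem_powerset.1 hB)
  have hinj : Set.InjOn (S ∪ ·) (Sᶜ.powerset : Set (Finset α)) := fun B hB C hC h => by
    simpa [union_sdiff_cancel_left (hdisj _ hB), union_sdiff_cancel_left (hdisj _ hC)] using
      congrArg (· \ S) h
  have hIci : univ.filter (S ≤ ·) = Sᶜ.powerset.image (S ∪ ·) := by
    rw [compl_eq_univ_sdiff, ← Icc_eq_image_powerset (subset_univ S)]
    ext A
    simp
  calc randomSubsetExpectation θ ((Set.Ici S).indicator 1)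
      = ∑ A with S ≤ A, θ ^ #A * (1 - θ) ^ (Fintype.card α - #A) := by
        simp [randomSubsetExpectation_apply, Set.indicator_apply, sum_filter]
    _ = ∑ B ∈ Sᶜ.powerset, θ ^ #S * (θ ^ #B * (1 - θ) ^ (#Sᶜ - #B)) := by
        rw [hIci, sum_image hinj]
        refine sum_congr rfl fun B hB => ?_
        rw [card_union_of_disjoint (hdisj B hB), card_compl, ← Nat.sub_sub, pow_add, mul_assoc]
    _ = θ ^ #S := by rw [← mul_sum, sum_pow_mul_eq_add_pow]; simp

lemma randomSubsetExpectation_one (θ : ℝ) :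
    randomSubsetExpectation θ (1 : Finset α → ℝ) = 1 := by
  have hIci : Set.Ici (∅ : Finset α) = Set.univ := Set.Ici_bot
  simpa [hIci] using randomSubsetExpectation_indicator_Ici θ (∅ : Finset α)

lemma prRandomSubset_univ_nonneg {θ : ℝ} (h0 : 0 ≤ θ) (h1 : θ ≤ 1) (E : Finset α → Prop) :
    0 ≤ prRandomSubset univ θ E := by
  rw [prRandomSubset_univ_eq_randomSubsetExpectation,
    ← map_zero (randomSubsetExpectation (α := α) θ)]
  exact randomSubsetExpectation_mono h0 h1 (Set.indicator_nonneg fun _ _ => zero_le_one)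

lemma prRandomSubset_univ_not (θ : ℝ) (E : Finset α → Prop) :
    prRandomSubset univ θ (fun A => ¬ E A) = 1 - prRandomSubset univ θ E := by
  simp only [prRandomSubset_univ_eq_randomSubsetExpectation]
  rw [← randomSubsetExpectation_one (α := α) θ, ← map_sub, ← Set.indicator_compl]
  rfl

lemma prRandomSubset_exists_subset_le {θ : ℝ} (h0 : 0 ≤ θ) (h1 : θ ≤ 1)
    (𝓢 : Finset (Finset α)) :
    prRandomSubset univ θ (fun A => ∃ S ∈ 𝓢, S ⊆ A) ≤ ∑ S ∈ 𝓢, θ ^ #S := by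
  simp only [prRandomSubset_univ_eq_randomSubsetExpectation,
    ← randomSubsetExpectation_indicator_Ici, ← map_sum]
  refine randomSubsetExpectation_mono h0 h1 (Set.indicator_le' ?_ ?_)
  · rintro A ⟨S, hS, hSA⟩
    rw [Finset.sum_apply]
    calc (1 : Finset α → ℝ) A = (Set.Ici S).indicator 1 A := (Set.indicator_of_mem hSA 1).symm
      _ ≤ _ := single_le_sum (f := fun T => (Set.Ici T).indicator (1 : Finset α → ℝ) A)
        (fun T _ => Set.indicator_nonneg (fun _ _ => zero_le_one) A) hS
  · intro A _
    rw [Finset.sum_apply]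
    exact sum_nonneg fun T _ => Set.indicator_nonneg (fun _ _ => zero_le_one) A

lemma prRandomSubset_not_exists_subset_mul_sq_le [DecidableEq α] {θ : ℝ} (h0 : 0 ≤ θ)
    (h1 : θ ≤ 1) (𝓢 : Finset (Finset α)) :
    prRandomSubset univ θ (fun A => ¬ ∃ S ∈ 𝓢, S ⊆ A) * (∑ S ∈ 𝓢, θ ^ #S) ^ 2 ≤
      ∑ S ∈ 𝓢, ∑ T ∈ 𝓢, (θ ^ #(S ∪ T) - θ ^ #S * θ ^ #T) := by
  set μ := ∑ S ∈ 𝓢, θ ^ #S with hμ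
  set Y : Finset α → ℝ := ∑ S ∈ 𝓢, (Set.Ici S).indicator 1 with hY
  have hEY : randomSubsetExpectation θ Y = μ := by
    simp only [hY, map_sum, randomSubsetExpectation_indicator_Ici, hμ]
  have hEYY : randomSubsetExpectation θ (Y * Y) = ∑ S ∈ 𝓢, ∑ T ∈ 𝓢, θ ^ #(S ∪ T) := by
    simp only [hY, sum_mul_sum, ← Set.inter_indicator_one, Set.Ici_inter_Ici, sup_eq_union,
      map_sum, randomSubsetExpectation_indicator_Ici]
  calc prRandomSubset univ θ (fun A => ¬ ∃ S ∈ 𝓢, S ⊆ A) * μ ^ 2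
      = randomSubsetExpectation θ (μ ^ 2 • {A | ¬ ∃ S ∈ 𝓢, S ⊆ A}.indicator 1) := by
        rw [prRandomSubset_univ_eq_randomSubsetExpectation, map_smul, smul_eq_mul, mul_comm]
    _ ≤ randomSubsetExpectation θ (Y * Y - (2 * μ) • Y + μ ^ 2 • 1) := by
        refine randomSubsetExpectation_mono h0 h1 fun A => ?_
        have hsq : (Y * Y - (2 * μ) • Y + μ ^ 2 • 1) A = (Y A - μ) ^ 2 := by
          simp only [Pi.add_apply, Pi.sub_apply, Pi.mul_apply, Pi.smul_apply, Pi.one_apply,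
            smul_eq_mul]
          ring
        rw [hsq]
        by_cases hA : ∃ S ∈ 𝓢, S ⊆ A
        · simpa [hA] using sq_nonneg (Y A - μ)
        · have hYA : Y A = 0 := by
            rw [hY, Finset.sum_apply]
            exact sum_eq_zero fun S hS => Set.indicator_of_notMem (fun h => hA ⟨S, hS, h⟩) 1
          rw [hYA, zero_sub, neg_sq, Pi.smul_apply, smul_eq_mul]
          exact mul_le_of_le_one_right (sq_nonneg μ)
            (Set.indicator_le_self' (fun _ _ => zero_le_one) A)
    _ = ∑ S ∈ 𝓢, ∑ T ∈ 𝓢, θ ^ #(S ∪ T) - μ * μ := by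
        rw [map_add, map_sub, map_smul, map_smul, hEY, hEYY, randomSubsetExpectation_one,
          smul_eq_mul, smul_eq_mul]
        ring
    _ = ∑ S ∈ 𝓢, ∑ T ∈ 𝓢, (θ ^ #(S ∪ T) - θ ^ #S * θ ^ #T) := by
        simp only [sum_sub_distrib, hμ, sum_mul_sum]

lemma prRandomSubset_not_exists_subset_mul_card_sq_le [DecidableEq α] {θ : ℝ} (h0 : 0 < θ)
    (h1 : θ ≤ 1) {𝓢 : Finset (Finset α)} {ℓ : ℕ} (hℓ : ∀ S ∈ 𝓢, #S = ℓ) :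
    prRandomSubset univ θ (fun A => ¬ ∃ S ∈ 𝓢, S ⊆ A) * (#𝓢 : ℝ) ^ 2 ≤
      ∑ S ∈ 𝓢, ∑ T ∈ 𝓢, ((θ ^ #(S ∩ T))⁻¹ - 1) := by
  have hsum : ∑ S ∈ 𝓢, θ ^ #S = #𝓢 * θ ^ ℓ := by
    rw [sum_congr rfl fun S hS => by rw [hℓ S hS], sum_const, nsmul_eq_mul]
  have hterm : ∀ S ∈ 𝓢, ∀ T ∈ 𝓢,
      θ ^ #(S ∪ T) - θ ^ #S * θ ^ #T = (θ ^ ℓ) ^ 2 * ((θ ^ #(S ∩ T))⁻¹ - 1) := by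
    intro S hS T hT
    have hcard : θ ^ #(S ∪ T) * θ ^ #(S ∩ T) = (θ ^ ℓ) ^ 2 := by
      rw [← pow_add, card_union_add_card_inter, hℓ S hS, hℓ T hT, pow_add, sq]
    rw [mul_sub, ← hcard, mul_inv_cancel_right₀ (by positivity), hcard, hℓ S hS, hℓ T hT]
    ring
  refine le_of_mul_le_mul_left ?_ (by positivity : 0 < (θ ^ ℓ) ^ 2)
  calc (θ ^ ℓ) ^ 2 * (prRandomSubset univ θ (fun A => ¬ ∃ S ∈ 𝓢, S ⊆ A) * (#𝓢 : ℝ) ^ 2)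
      = prRandomSubset univ θ (fun A => ¬ ∃ S ∈ 𝓢, S ⊆ A) * (∑ S ∈ 𝓢, θ ^ #S) ^ 2 := by
        rw [hsum]
        ring
    _ ≤ ∑ S ∈ 𝓢, ∑ T ∈ 𝓢, (θ ^ #(S ∪ T) - θ ^ #S * θ ^ #T) :=
        prRandomSubset_not_exists_subset_mul_sq_le h0.le h1 𝓢
    _ = (θ ^ ℓ) ^ 2 * ∑ S ∈ 𝓢, ∑ T ∈ 𝓢, ((θ ^ #(S ∩ T))⁻¹ - 1) := by
        simp only [mul_sum]
        exact sum_congr rfl fun S hS => sum_congr rfl fun T hT => hterm S hS T hT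

end RandomSubset

section Flat

variable {K V : Type*} [Field K] [AddCommGroup V] [Module K V]

lemma isFlat_iff_exists_setOf_sub_mem {m : ℕ} {S : Set V} :
    IsFlat K m S ↔ ∃ W : Submodule K V, finrank K W = m ∧ ∃ p, S = {x | x - p ∈ W} := by
  have himage (W : Submodule K V) (p : V) : (p + ·) '' (W : Set V) = {x | x - p ∈ W} := by
    ext x
    simp [neg_add_eq_sub]
  simp only [IsFlat, himage]

lemma IsFlat.exists_eq_setOf_sub_mem {m : ℕ} {S : Set V} (hS : IsFlat K m S) {p : V}
    (hp : p ∈ S) : ∃ W : Submodule K V, finrank K W = m ∧ S = {x | x - p ∈ W} := by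
  obtain ⟨W, hW, v, rfl⟩ := isFlat_iff_exists_setOf_sub_mem.1 hS
  refine ⟨W, hW, Set.ext fun x => ?_⟩
  rw [Set.mem_ofPred_eq, Set.mem_ofPred_eq, ← W.sub_mem_iff_left hp, sub_sub_sub_cancel_right]

lemma IsFlat.nonempty {m : ℕ} {S : Set V} (hS : IsFlat K m S) : S.Nonempty := by
  obtain ⟨W, -, v, rfl⟩ := isFlat_iff_exists_setOf_sub_mem.1 hS
  exact ⟨v, by simp⟩

lemma IsFlat.ncard_eq [Finite V] {m : ℕ} {S : Set V} (hS : IsFlat K m S) :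
    S.ncard = Nat.card K ^ m := by
  obtain ⟨W, hW, v, rfl⟩ := hS
  rw [Set.ncard_image_of_injective _ (add_right_injective v), ← hW,
    ← Module.natCard_eq_pow_finrank (K := K) (V := W)]
  rfl

lemma IsFlat.inter [FiniteDimensional K V] {m m' : ℕ} {S T : Set V} (hS : IsFlat K m S)
    (hT : IsFlat K m' T) (h : (S ∩ T).Nonempty) : ∃ k ≤ m, IsFlat K k (S ∩ T) := by
  obtain ⟨p, hpS, hpT⟩ := h
  obtain ⟨W, rfl, hSW⟩ := hS.exists_eq_setOf_sub_mem hpS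
  obtain ⟨W', -, hTW'⟩ := hT.exists_eq_setOf_sub_mem hpT
  exact ⟨finrank K (W ⊓ W' : Submodule K V), Submodule.finrank_mono inf_le_left,
    isFlat_iff_exists_setOf_sub_mem.2 ⟨W ⊓ W', rfl, p, by rw [hSW, hTW']; rfl⟩⟩

lemma IsFlat.image_affineEquiv {V' : Type*} [AddCommGroup V'] [Module K V'] {m : ℕ} {S : Set V}
    (hS : IsFlat K m S) (e : V ≃ᵃ[K] V') : IsFlat K m (e '' S) := by
  obtain ⟨W, hW, v, rfl⟩ := hS
  refine ⟨W.map (e.linear : V →ₗ[K] V'), by rw [e.linear.finrank_map_eq, hW], e v, ?_⟩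
  simp only [Set.image_image, Submodule.map_coe, LinearEquiv.coe_coe]
  refine Set.image_congr fun w _ => ?_
  rw [add_comm v w, add_comm (e v)]
  exact e.map_vadd v w

lemma exists_affineEquiv_apply_add_of_linearIndependent [FiniteDimensional K V] {ι : Type*}
    {u u' : ι → V}
    (hu : LinearIndependent K u) (hu' : LinearIndependent K u') (x x' : V) :
    ∃ e : V ≃ᵃ[K] V, e x = x' ∧ ∀ i, e (x + u i) = x' + u' i := by
  obtain ⟨g, hg⟩ := Submodule.exists_linearEquiv_restrict_eq
    ((Basis.span hu).equiv (Basis.span hu') (Equiv.refl ι))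
  have hgu (i : ι) : g (u i) = u' i := by
    have := hg (Basis.span hu i)
    rwa [Basis.equiv_apply, Basis.span_apply, Basis.span_apply, Equiv.refl_apply, eq_comm] at this
  exact ⟨(AffineEquiv.vaddConst K x).symm.trans
    (g.toAffineEquiv.trans (AffineEquiv.vaddConst K x')), by simp, fun i => by simp [hgu, add_comm]⟩

end Flat

section Counting

variable (K : Type*) {V : Type*} [Field K] [AddCommGroup V] [Module K V] [Fintype V]

variable (V) in
open Classical in
/-- The family `𝓕` of all `m`-flats of `V`, encoded as finsets so that it can be counted and summed
over. -/
noncomputable def flats (m : ℕ) : Finset (Finset V) := {S | IsFlat K m (S : Set V)}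

open Classical in
/-- The affine frames of `k`-flats that lie in `S`: the pairs `(x, u)` standing for the points
`x, x + u 0, …, x + u (k - 1)` of `S` with `u` linearly independent. Counting them bounds the number
of `m`-flats that meet a given one in a `k`-flat. -/
noncomputable def affineFrames (k : ℕ) (S : Finset V) : Finset (V × (Fin k → V)) :=
  {f | LinearIndependent K f.2 ∧ f.1 ∈ S ∧ ∀ i, f.1 + f.2 i ∈ S}

variable {K} {k m : ℕ} {S T : Finset V} {f : V × (Fin k → V)}

lemma mem_flats : S ∈ flats K V m ↔ IsFlat K m (S : Set V) := by
  simp [flats]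

lemma mem_affineFrames :
    f ∈ affineFrames K k S ↔ LinearIndependent K f.2 ∧ f.1 ∈ S ∧ ∀ i, f.1 + f.2 i ∈ S := by
  simp [affineFrames]

lemma exists_mem_flats_subset_iff {A : Finset V} :
    (∃ S ∈ flats K V m, S ⊆ A) ↔ ∃ S : Set V, IsFlat K m S ∧ S ⊆ A := by
  constructor
  · rintro ⟨S, hS, hSA⟩
    exact ⟨S, mem_flats.1 hS, by exact_mod_cast hSA⟩
  · rintro ⟨S, hS, hSA⟩
    obtain ⟨S, rfl⟩ := S.toFinite.exists_finset_coe
    exact ⟨S, mem_flats.2 hS, by exact_mod_cast hSA⟩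

lemma natCard_isFlat : Nat.card {S : Set V // IsFlat K m S} = #(flats K V m) := by
  rw [← Fintype.card_coe, ← Nat.card_eq_fintype_card]
  refine (Nat.card_congr (Fintype.finsetEquivSet.subtypeEquiv fun S => ?_)).symm
  rw [mem_flats, Fintype.finsetEquivSet_apply]

lemma card_of_mem_flats (hS : S ∈ flats K V m) : #S = Nat.card K ^ m := by
  rw [← (mem_flats.1 hS).ncard_eq, Set.ncard_coe_finset]

lemma flats_nonempty (hm : m ≤ finrank K V) : (flats K V m).Nonempty := by
  obtain ⟨u, hu⟩ := exists_linearIndependent_of_le_finrank hm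
  have hflat : IsFlat K m (Submodule.span K (Set.range u) : Set V) :=
    ⟨Submodule.span K (Set.range u), by rw [finrank_span_eq_card hu, Fintype.card_fin], 0, by simp⟩
  obtain ⟨S, hS⟩ := (Set.toFinite (Submodule.span K (Set.range u) : Set V)).exists_finset_coe
  exact ⟨S, mem_flats.2 (hS ▸ hflat)⟩

lemma affineFrames_nonempty (hS : S ∈ flats K V k) : (affineFrames K k S).Nonempty := by
  obtain ⟨x, hx⟩ := (mem_flats.1 hS).nonempty
  obtain ⟨W, hW, hSW⟩ := (mem_flats.1 hS).exists_eq_setOf_sub_mem hx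
  have hmem (y : V) : y ∈ S ↔ y - x ∈ W := by rw [← mem_coe, hSW, Set.mem_ofPred_eq]
  obtain ⟨u, hu⟩ := exists_linearIndependent_of_le_finrank hW.ge
  exact ⟨(x, fun i => u i), mem_affineFrames.2
    ⟨hu.map' W.subtype W.ker_subtype, hx, fun i => by simp [hmem]⟩⟩

lemma eq_of_mem_affineFrames (hS : S ∈ flats K V k) (hT : T ∈ flats K V k)
    (hfS : f ∈ affineFrames K k S) (hfT : f ∈ affineFrames K k T) : S = T := by
  have hspan {R : Finset V} (hR : R ∈ flats K V k) (hf : f ∈ affineFrames K k R) :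
      (R : Set V) = {y | y - f.1 ∈ Submodule.span K (Set.range f.2)} := by
    obtain ⟨hli, hx, hu⟩ := mem_affineFrames.1 hf
    obtain ⟨W, hW, hRW⟩ := (mem_flats.1 hR).exists_eq_setOf_sub_mem (mem_coe.2 hx)
    have hle : Submodule.span K (Set.range f.2) ≤ W := Submodule.span_le.2 <| by
      rintro _ ⟨i, rfl⟩
      have : f.1 + f.2 i ∈ (R : Set V) := hu i
      simpa [hRW] using this
    rw [hRW, Submodule.eq_of_le_of_finrank_eq hle
      (by rw [finrank_span_eq_card hli, Fintype.card_fin, hW])]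
  exact coe_injective ((hspan hS hfS).trans (hspan hT hfT).symm)

lemma card_affineFrames_le : #(affineFrames K k S) ≤ #S ^ (k + 1) := by
  calc #(affineFrames K k S) ≤ #(S ×ˢ Fintype.piFinset fun _ : Fin k => S) := by
        refine card_le_card_of_injOn (fun f => (f.1, fun i => f.1 + f.2 i)) (fun f hf => ?_) ?_
        · obtain ⟨-, hx, hu⟩ := mem_affineFrames.1 hf
          simpa using ⟨hx, hu⟩
        · rintro ⟨x, u⟩ - ⟨y, v⟩ - h
          obtain ⟨rfl, h⟩ := Prod.mk.inj h
          simpa [funext_iff] using h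
    _ = #S ^ (k + 1) := by simp [pow_succ']

lemma pow_le_two_pow_mul_card_affineFrames_univ [Finite K] (hk : k ≤ finrank K V) :
    Nat.card K ^ (finrank K V * (k + 1)) ≤ 2 ^ k * #(affineFrames K k (univ : Finset V)) := by
  have := Fintype.ofFinite K
  set q := Fintype.card K
  set n := finrank K V
  have hcardV : Fintype.card V = q ^ n := card_eq_pow_finrank
  have hframes : #(affineFrames K k (univ : Finset V)) =
      q ^ n * Nat.card {u : Fin k → V // LinearIndependent K u} := by
    classical
    have hprod : affineFrames K k (univ : Finset V) =
        univ ×ˢ ({u | LinearIndependent K u} : Finset (Fin k → V)) := by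
      ext f
      simp [mem_affineFrames]
    rw [hprod, card_product, card_univ, hcardV, Nat.card_eq_fintype_card, Fintype.card_subtype]
  have hfactor (i : Fin k) : q ^ n ≤ 2 * (q ^ n - q ^ (i : ℕ)) := by
    have hpow : 2 * q ^ (i : ℕ) ≤ q ^ n := calc
      2 * q ^ (i : ℕ) ≤ q * q ^ (i : ℕ) := by gcongr; exact Fintype.one_lt_card
      _ = q ^ (i + 1 : ℕ) := (pow_succ' q i).symm
      _ ≤ q ^ n := Nat.pow_le_pow_right Fintype.card_pos (by omega)
    omega
  calc Nat.card K ^ (n * (k + 1)) = q ^ n * ∏ _i : Fin k, q ^ n := by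
        rw [Nat.card_eq_fintype_card, prod_const, card_univ, Fintype.card_fin, ← pow_succ', pow_mul]
    _ ≤ q ^ n * ∏ i : Fin k, 2 * (q ^ n - q ^ (i : ℕ)) := by
        gcongr with i
        exact hfactor i
    _ = 2 ^ k * #(affineFrames K k (univ : Finset V)) := by
        rw [hframes, card_linearIndependent hk, prod_mul_distrib, prod_const, card_univ,
          Fintype.card_fin]
        ring

lemma card_flats_le [Finite K] :
    #(flats K V m) ≤ Nat.card K ^ (finrank K V * (m + 1)) := by
  classical
  have hinj : #(flats K V m) * 1 ≤ #(affineFrames K m (univ : Finset V)) * 1 := by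
    refine card_mul_le_card_mul (fun T f => f ∈ affineFrames K m T) (fun T hT => ?_) fun f _ => ?_
    · obtain ⟨f, hf⟩ := affineFrames_nonempty hT
      refine card_pos.2 ⟨f, mem_filter.2 ⟨?_, hf⟩⟩
      simpa [mem_affineFrames] using (mem_affineFrames.1 hf).1
    · refine card_le_one.2 fun S hS T hT => ?_
      rw [mem_bipartiteBelow] at hS hT
      exact eq_of_mem_affineFrames hS.1 hT.1 hS.2 hT.2
  calc #(flats K V m) ≤ #(affineFrames K m (univ : Finset V)) := by simpa using hinj
    _ ≤ #(univ : Finset V) ^ (m + 1) := card_affineFrames_le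
    _ = Nat.card K ^ (finrank K V * (m + 1)) := by
      rw [card_univ, ← Nat.card_eq_fintype_card, Module.natCard_eq_pow_finrank (K := K), pow_mul]

variable [DecidableEq V]

lemma exists_inter_mem_flats (hS : S ∈ flats K V m) (hT : T ∈ flats K V m)
    (h : (S ∩ T).Nonempty) : ∃ k ≤ m, S ∩ T ∈ flats K V k := by
  simp only [mem_flats, coe_inter]
  exact (mem_flats.1 hS).inter (mem_flats.1 hT) (by exact_mod_cast h)

lemma card_flats_filter_mem_affineFrames_le {g : V × (Fin k → V)}
    (hf : LinearIndependent K f.2) (hg : LinearIndependent K g.2) :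
    #{T ∈ flats K V m | f ∈ affineFrames K k T} ≤
      #{T ∈ flats K V m | g ∈ affineFrames K k T} := by
  obtain ⟨e, hex, heu⟩ := exists_affineEquiv_apply_add_of_linearIndependent hf hg f.1 g.1
  refine card_le_card_of_injOn (fun T => T.map e.toEquiv.toEmbedding) (fun T hT => ?_)
    (Finset.map_injective _).injOn
  simp only [coe_filter, Set.mem_ofPred_eq, mem_flats, mem_affineFrames] at hT ⊢
  obtain ⟨hT, -, hx, hu⟩ := hT
  refine ⟨?_, hg, ?_, fun i => ?_⟩
  · simpa using hT.image_affineEquiv e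
  · exact mem_map.2 ⟨f.1, hx, hex⟩
  · exact mem_map.2 ⟨f.1 + f.2 i, hu i, heu i⟩

lemma card_flats_filter_mem_affineFrames_mul_le [Finite K] (hf : LinearIndependent K f.2) :
    #{T ∈ flats K V m | f ∈ affineFrames K k T} * Nat.card K ^ (finrank K V * (k + 1)) ≤
      2 ^ k * Nat.card K ^ (m * (k + 1)) * #(flats K V m) := by
  have hk : k ≤ finrank K V := by simpa using hf.fintype_card_le_finrank
  have hcount : #(affineFrames K k (univ : Finset V)) *
      #{T ∈ flats K V m | f ∈ affineFrames K k T} ≤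
        #(flats K V m) * Nat.card K ^ (m * (k + 1)) := by
    refine card_mul_le_card_mul (fun g T => g ∈ affineFrames K k T) (fun g hg => ?_) fun T hT => ?_
    · exact card_flats_filter_mem_affineFrames_le hf (mem_affineFrames.1 hg).1
    · calc _ ≤ #(affineFrames K k T) := card_le_card fun g hg => (mem_filter.1 hg).2
        _ ≤ #T ^ (k + 1) := card_affineFrames_le
        _ = Nat.card K ^ (m * (k + 1)) := by rw [card_of_mem_flats hT, pow_mul]
  calc #{T ∈ flats K V m | f ∈ affineFrames K k T} * Nat.card K ^ (finrank K V * (k + 1))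
      ≤ #{T ∈ flats K V m | f ∈ affineFrames K k T} *
          (2 ^ k * #(affineFrames K k (univ : Finset V))) := by
        gcongr
        exact pow_le_two_pow_mul_card_affineFrames_univ hk
    _ = 2 ^ k * (#(affineFrames K k (univ : Finset V)) *
          #{T ∈ flats K V m | f ∈ affineFrames K k T}) := by ring
    _ ≤ 2 ^ k * (#(flats K V m) * Nat.card K ^ (m * (k + 1))) := by gcongr
    _ = _ := by ring

lemma card_flats_filter_inter_mem_flats_mul_le [Finite K] :
    #{T ∈ flats K V m | S ∩ T ∈ flats K V k} * Nat.card K ^ (finrank K V * (k + 1)) ≤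
      2 ^ k * (#S * Nat.card K ^ m) ^ (k + 1) * #(flats K V m) := by
  have hcover : {T ∈ flats K V m | S ∩ T ∈ flats K V k} ⊆
      (affineFrames K k S).biUnion fun f => {T ∈ flats K V m | f ∈ affineFrames K k T} := by
    intro T hT
    obtain ⟨hT, hST⟩ := mem_filter.1 hT
    obtain ⟨f, hf⟩ := affineFrames_nonempty hST
    simp only [mem_affineFrames, mem_inter, forall_and] at hf
    exact mem_biUnion.2 ⟨f, mem_affineFrames.2 ⟨hf.1, hf.2.1.1, hf.2.2.1⟩,
      mem_filter.2 ⟨hT, mem_affineFrames.2 ⟨hf.1, hf.2.1.2, hf.2.2.2⟩⟩⟩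
  calc #{T ∈ flats K V m | S ∩ T ∈ flats K V k} * Nat.card K ^ (finrank K V * (k + 1))
      ≤ ∑ f ∈ affineFrames K k S, #{T ∈ flats K V m | f ∈ affineFrames K k T} *
          Nat.card K ^ (finrank K V * (k + 1)) := by
        rw [← sum_mul]
        gcongr
        exact (card_le_card hcover).trans card_biUnion_le
    _ ≤ ∑ _f ∈ affineFrames K k S, 2 ^ k * Nat.card K ^ (m * (k + 1)) * #(flats K V m) :=
        sum_le_sum fun f hf =>
          card_flats_filter_mem_affineFrames_mul_le (mem_affineFrames.1 hf).1
    _ ≤ #S ^ (k + 1) * (2 ^ k * Nat.card K ^ (m * (k + 1)) * #(flats K V m)) := by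
        rw [sum_const, smul_eq_mul]
        gcongr
        exact card_affineFrames_le
    _ = _ := by ring

lemma card_flats_filter_inter_mem_flats_self_le (hS : S ∈ flats K V m) :
    #{T ∈ flats K V m | S ∩ T ∈ flats K V m} ≤ 1 := by
  have heq {T : Finset V} (hT : T ∈ {T ∈ flats K V m | S ∩ T ∈ flats K V m}) : T = S := by
    obtain ⟨hT, hST⟩ := mem_filter.1 hT
    have hST_eq_S : S ∩ T = S := eq_of_subset_of_card_le inter_subset_left
      (by rw [card_of_mem_flats hS, card_of_mem_flats hST])
    have hST_eq_T : S ∩ T = T := eq_of_subset_of_card_le inter_subset_right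
      (by rw [card_of_mem_flats hT, card_of_mem_flats hST])
    exact hST_eq_T.symm.trans hST_eq_S
  exact card_le_one.2 fun T hT T' hT' => (heq hT).trans (heq hT').symm

end Counting

section Asymptotics

variable {k m n q : ℕ} {f x s : ℝ}

/- Below, `f` plays the role of the proportion of `m`-flats that meet a given `m`-flat in a
`k`-flat, and `x` that of `(θ ^ q ^ k)⁻¹`, so that `x ^ q ^ (m - k)` is `(θ ^ q ^ m)⁻¹`. -/

lemma le_exp_of_pow_pow_le (hk : k < m) (hq : 1 ≤ q) (hx : 1 ≤ x)
    (h : x ^ q ^ (m - k) ≤ q ^ (n * (m + 1))) :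
    x ≤ Real.exp (n * ((m + 1) * (Real.log q / q))) := by
  have hq0 : (0 : ℝ) < q := by exact_mod_cast hq
  rw [← Real.log_le_iff_le_exp (by positivity), ← mul_div_assoc, ← mul_div_assoc, le_div_iff₀' hq0]
  calc q * Real.log x = Real.log (x ^ q) := by rw [Real.log_pow]
    _ ≤ Real.log (q ^ (n * (m + 1))) := by
        gcongr
        exact (pow_le_pow_right₀ hx (Nat.le_self_pow (by omega) q)).trans h
    _ = n * ((m + 1) * Real.log q) := by
        rw [Real.log_pow]
        push_cast
        ring

lemma mul_sub_one_le_of_le_exp (hq : 1 ≤ q) (hf0 : 0 ≤ f) (hf1 : f ≤ 1)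
    (hf : f * (q : ℝ) ^ (n * (k + 1)) ≤ 2 ^ k * (q ^ m * q ^ m) ^ (k + 1)) (hs0 : 0 ≤ s)
    (hsq : Real.exp s ≤ q) (hx : x ≤ Real.exp (n * s)) :
    f * (x - 1) ≤ Real.exp (2 * m * s) - 1 + 2 ^ k * Real.exp ((2 * m + 1) * s) / q := by
  have hq1 : (1 : ℝ) ≤ q := by exact_mod_cast hq
  have hexp : 1 ≤ Real.exp (2 * m * s) := Real.one_le_exp (by positivity)
  obtain hn | hn := le_or_gt n (2 * m)
  · have hx' : x ≤ Real.exp (2 * m * s) := hx.trans <| by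
      gcongr
      exact_mod_cast hn
    calc f * (x - 1) ≤ f * (Real.exp (2 * m * s) - 1) := by gcongr
      _ ≤ Real.exp (2 * m * s) - 1 := mul_le_of_le_one_left (by linarith) hf1
      _ ≤ _ := le_add_of_nonneg_right (by positivity)
  · obtain ⟨d, rfl⟩ := Nat.exists_eq_add_of_lt hn
    have hf' : f * (q : ℝ) ^ (d + 1) ≤ 2 ^ k := by
      refine le_of_mul_le_mul_right ?_ (by positivity : 0 < ((q : ℝ) ^ m * q ^ m) ^ (k + 1))
      calc f * (q : ℝ) ^ (d + 1) * (q ^ m * q ^ m) ^ (k + 1)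
          ≤ f * ((q : ℝ) ^ (d + 1)) ^ (k + 1) * (q ^ m * q ^ m) ^ (k + 1) := by
            gcongr
            exact le_self_pow₀ (one_le_pow₀ hq1) k.succ_ne_zero
        _ = f * (q : ℝ) ^ ((2 * m + d + 1) * (k + 1)) := by ring
        _ ≤ _ := hf
    have hx' : x ≤ Real.exp ((2 * m + 1) * s) * (q : ℝ) ^ d := calc
      x ≤ Real.exp ((2 * m + d + 1 : ℕ) * s) := hx
      _ = Real.exp ((2 * m + 1) * s) * Real.exp s ^ d := by
          rw [← Real.exp_nat_mul, ← Real.exp_add]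
          push_cast
          ring_nf
      _ ≤ _ := by gcongr
    calc f * (x - 1) ≤ f * (Real.exp ((2 * m + 1) * s) * (q : ℝ) ^ d) := by gcongr; linarith
      _ = f * (q : ℝ) ^ (d + 1) * Real.exp ((2 * m + 1) * s) / q := by
          field_simp
          ring
      _ ≤ 2 ^ k * Real.exp ((2 * m + 1) * s) / q := by gcongr
      _ ≤ _ := le_add_of_nonneg_left (by linarith)

lemma eventually_card_forall_mul_sub_one_le (hk : k < m) {ε : ℝ} (hε : 0 < ε) :
    ∀ᶠ q : ℕ in atTop, ∀ (n : ℕ) (f x : ℝ), 0 ≤ f → f ≤ 1 →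
      f * (q : ℝ) ^ (n * (k + 1)) ≤ 2 ^ k * (q ^ m * q ^ m) ^ (k + 1) → 1 ≤ x →
      x ^ q ^ (m - k) ≤ (q : ℝ) ^ (n * (m + 1)) → f * (x - 1) ≤ ε := by
  set s : ℕ → ℝ := fun q => (m + 1) * (Real.log q / q)
  have hs : Tendsto s atTop (nhds 0) := by
    simpa using (Real.isLittleO_log_id_atTop.tendsto_div_nhds_zero.comp
      tendsto_natCast_atTop_atTop).const_mul ((m : ℝ) + 1)
  have hexp (c : ℝ) : Tendsto (fun q => Real.exp (c * s q)) atTop (nhds 1) := by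
    simpa using (hs.const_mul c).rexp
  have hbound : Tendsto (fun q : ℕ => Real.exp (2 * m * s q) - 1 +
      2 ^ k * Real.exp ((2 * m + 1) * s q) / q) atTop (nhds 0) := by
    simpa using ((hexp (2 * m)).sub_const 1).add
      (((hexp (2 * m + 1)).const_mul (2 ^ k)).div_atTop tendsto_natCast_atTop_atTop)
  filter_upwards [hbound.eventually_le_const hε, (hexp 1).eventually_le_const one_lt_two,
    eventually_ge_atTop 2] with q hq hsq hq2 n f x hf0 hf1 hf hx hxq
  have hq1 : 1 ≤ q := one_le_two.trans hq2
  rw [one_mul] at hsq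
  exact (mul_sub_one_le_of_le_exp hq1 hf0 hf1 hf (by positivity)
    (hsq.trans (by exact_mod_cast hq2)) (le_exp_of_pow_pow_le hk hq1 hx hxq)).trans hq

lemma eventually_forall_mul_le (hk : k < m) (hq : 2 ≤ q) {ε : ℝ} (hε : 0 < ε) :
    ∀ᶠ t : ℝ in atTop, ∀ (n : ℕ) (f x : ℝ), 0 ≤ f →
      f * (q : ℝ) ^ (n * (k + 1)) ≤ 2 ^ k * (q ^ m * q ^ m) ^ (k + 1) →
      x ^ q ^ (m - k) * t ≤ (q : ℝ) ^ (n * (m + 1)) → f * x ≤ ε := by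
  set r := q ^ (m - k)
  set C : ℝ := 2 ^ k * (q ^ m * q ^ m) ^ (k + 1)
  have hr : m + 1 ≤ (k + 1) * r := by
    obtain ⟨d, rfl⟩ := Nat.exists_eq_add_of_lt hk
    have hd : d + 2 ≤ r := calc
      d + 2 ≤ q ^ (d + 1) := Nat.lt_pow_self hq
      _ = r := by simp only [r, show k + d + 1 - k = d + 1 by omega]
    nlinarith
  filter_upwards [eventually_gt_atTop ((C / ε) ^ r), eventually_gt_atTop 0]
    with t ht ht0 n f x hf0 hf hx
  have hfx : (f * x) ^ r * t ≤ C ^ r := calc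
    (f * x) ^ r * t = f ^ r * (x ^ r * t) := by ring
    _ ≤ f ^ r * (q : ℝ) ^ (n * (m + 1)) := by gcongr
    _ ≤ f ^ r * (q : ℝ) ^ (n * ((k + 1) * r)) := by
        gcongr
        exact_mod_cast one_le_two.trans hq
    _ = (f * (q : ℝ) ^ (n * (k + 1))) ^ r := by ring
    _ ≤ C ^ r := by gcongr
  refine (lt_of_pow_lt_pow_left₀ r hε.le ?_).le
  refine lt_of_mul_lt_mul_right (hfx.trans_lt ?_) ht0.le
  rwa [← div_lt_iff₀' (by positivity), ← div_pow]

lemma eventually_forall_mul_sub_one_le (hk : k < m) {ε : ℝ} (hε : 0 < ε) :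
    ∀ᶠ t : ℝ in atTop, ∀ (q n : ℕ) (f x : ℝ), 2 ≤ q → 0 ≤ f → f ≤ 1 →
      f * (q : ℝ) ^ (n * (k + 1)) ≤ 2 ^ k * (q ^ m * q ^ m) ^ (k + 1) → 1 ≤ x →
      x ^ q ^ (m - k) * t ≤ (q : ℝ) ^ (n * (m + 1)) → f * (x - 1) ≤ ε := by
  obtain ⟨Q, hQ⟩ := eventually_atTop.1 (eventually_card_forall_mul_sub_one_le hk hε)
  have hsmall : ∀ᶠ t : ℝ in atTop, ∀ q ∈ Ico 2 Q, ∀ (n : ℕ) (f x : ℝ), 0 ≤ f →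
      f * (q : ℝ) ^ (n * (k + 1)) ≤ 2 ^ k * (q ^ m * q ^ m) ^ (k + 1) →
      x ^ q ^ (m - k) * t ≤ (q : ℝ) ^ (n * (m + 1)) → f * x ≤ ε :=
    (eventually_all_finset _).2 fun q hq => eventually_forall_mul_le hk (mem_Ico.1 hq).1 hε
  filter_upwards [hsmall, eventually_ge_atTop 1] with t hsmall ht q n f x hq hf0 hf1 hf hx hxt
  obtain hqQ | hQq := lt_or_ge q Q
  · exact (mul_le_mul_of_nonneg_left (sub_le_self x zero_le_one) hf0).trans
      (hsmall q (mem_Ico.2 ⟨hq, hqQ⟩) n f x hf0 hf hxt)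
  · exact hQ q hQq n f x hf0 hf1 hf hx ((le_mul_of_one_le_right (by positivity) ht).trans hxt)

end Asymptotics

section RandomFlats

lemma rpow_neg_one_div_natCast_pow {a : ℝ} (ha : 0 ≤ a) {ℓ : ℕ} (hℓ : ℓ ≠ 0) :
    (a ^ (-(1 : ℝ) / ℓ)) ^ ℓ = a⁻¹ := by
  rw [neg_div, one_div, Real.rpow_neg ha, inv_pow, Real.rpow_inv_natCast_pow ha hℓ]

variable {K V : Type*} [Field K] [AddCommGroup V] [Module K V] [Fintype V] {m : ℕ} {θ t : ℝ}

lemma sum_inv_pow_card_inter_sub_one_le [DecidableEq V] (h0 : 0 < θ) (h1 : θ ≤ 1) {S : Finset V}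
    (hS : S ∈ flats K V m) :
    ∑ T ∈ flats K V m, ((θ ^ #(S ∩ T))⁻¹ - 1) ≤
      ∑ k ∈ range (m + 1), #{T ∈ flats K V m | S ∩ T ∈ flats K V k} *
        ((θ ^ Nat.card K ^ k)⁻¹ - 1) := by
  have hnonneg (a : ℕ) : 0 ≤ (θ ^ a)⁻¹ - 1 :=
    sub_nonneg.2 ((one_le_inv₀ (by positivity)).2 (pow_le_one₀ h0.le h1))
  have hterm : ∀ T ∈ flats K V m, (θ ^ #(S ∩ T))⁻¹ - 1 ≤
      ∑ k ∈ range (m + 1), if S ∩ T ∈ flats K V k then (θ ^ Nat.card K ^ k)⁻¹ - 1 else 0 := by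
    intro T hT
    have hite : ∀ k ∈ range (m + 1),
        0 ≤ if S ∩ T ∈ flats K V k then (θ ^ Nat.card K ^ k)⁻¹ - 1 else 0 := fun k _ => by
      split_ifs
      exacts [hnonneg _, le_rfl]
    obtain hST | hST := (S ∩ T).eq_empty_or_nonempty
    · simpa [hST] using sum_nonneg hite
    · obtain ⟨k, hkm, hk⟩ := exists_inter_mem_flats hS hT hST
      have hle := single_le_sum hite (mem_range_succ_iff.2 hkm)
      rwa [if_pos hk, ← card_of_mem_flats hk] at hle
  calc ∑ T ∈ flats K V m, ((θ ^ #(S ∩ T))⁻¹ - 1)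
      ≤ ∑ T ∈ flats K V m, ∑ k ∈ range (m + 1),
          if S ∩ T ∈ flats K V k then (θ ^ Nat.card K ^ k)⁻¹ - 1 else 0 := sum_le_sum hterm
    _ = _ := by
        rw [sum_comm]
        simp only [← sum_filter, sum_const, nsmul_eq_mul]

variable [Finite K]

lemma prRandomSubset_exists_mem_flats_le (h0 : 0 ≤ θ) (h1 : θ ≤ 1) (ht : 0 < t)
    (hθ : θ < (#(flats K V m) * t) ^ (-(1 : ℝ) / (Nat.card K ^ m : ℕ))) :
    prRandomSubset univ θ (fun A => ∃ S ∈ flats K V m, S ⊆ A) ≤ t⁻¹ := by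
  have hpow : θ ^ Nat.card K ^ m ≤ (#(flats K V m) * t)⁻¹ := by
    rw [← rpow_neg_one_div_natCast_pow (by positivity) (pow_ne_zero m (Nat.card_pos (α := K)).ne')]
    exact pow_le_pow_left₀ h0 hθ.le _
  calc prRandomSubset univ θ (fun A => ∃ S ∈ flats K V m, S ⊆ A)
      ≤ ∑ S ∈ flats K V m, θ ^ #S := prRandomSubset_exists_subset_le h0 h1 _
    _ = #(flats K V m) * θ ^ Nat.card K ^ m := by
        rw [sum_congr rfl fun S hS => by rw [card_of_mem_flats hS], sum_const, nsmul_eq_mul]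
    _ ≤ #(flats K V m) * (#(flats K V m) * t)⁻¹ := by gcongr
    _ = #(flats K V m) * (#(flats K V m) : ℝ)⁻¹ * t⁻¹ := by rw [mul_inv, mul_assoc]
    _ ≤ t⁻¹ := mul_le_of_le_one_left (by positivity) mul_inv_le_one

lemma eventually_card_flats_filter_inter_mem_flats_mul_le {k m : ℕ} (hk : k ≤ m) {ε : ℝ}
    (hε : 0 < ε) :
    ∀ᶠ t : ℝ in atTop, ∀ (K V : Type*) [Field K] [Finite K] [AddCommGroup V] [Module K V]
      [Fintype V] [DecidableEq V] (θ : ℝ), 0 < θ → θ ≤ 1 →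
      (θ ^ Nat.card K ^ m)⁻¹ * t ≤ #(flats K V m) → ∀ S ∈ flats K V m,
      #{T ∈ flats K V m | S ∩ T ∈ flats K V k} * ((θ ^ Nat.card K ^ k)⁻¹ - 1) ≤
        #(flats K V m) * ε := by
  obtain rfl | hkm := hk.eq_or_lt
  · filter_upwards [eventually_gt_atTop 0, eventually_ge_atTop ε⁻¹]
      with t ht htε K V _ _ _ _ _ _ θ h0 h1 hθ S hS
    have hx : 0 ≤ (θ ^ Nat.card K ^ k)⁻¹ - 1 :=
      sub_nonneg.2 ((one_le_inv₀ (by positivity)).2 (pow_le_one₀ h0.le h1))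
    have hcard : (#{T ∈ flats K V k | S ∩ T ∈ flats K V k} : ℝ) ≤ 1 := by
      exact_mod_cast card_flats_filter_inter_mem_flats_self_le hS
    calc _ ≤ (θ ^ Nat.card K ^ k)⁻¹ - 1 := mul_le_of_le_one_left hx hcard
      _ ≤ (θ ^ Nat.card K ^ k)⁻¹ := sub_le_self _ zero_le_one
      _ ≤ #(flats K V k) / t := (le_div_iff₀ ht).2 hθ
      _ ≤ #(flats K V k) * ε := by
        rw [div_eq_mul_inv]
        gcongr
        exact inv_le_of_inv_le₀ hε htε
  · filter_upwards [eventually_forall_mul_sub_one_le hkm hε]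
      with t ht K V _ _ _ _ _ _ θ h0 h1 hθ S hS
    have hN : (0 : ℝ) < #(flats K V m) := by exact_mod_cast card_pos.2 ⟨S, hS⟩
    set c := #{T ∈ flats K V m | S ∩ T ∈ flats K V k}
    have hc : c / (#(flats K V m) : ℝ) * ((θ ^ Nat.card K ^ k)⁻¹ - 1) ≤ ε := by
      refine ht (Nat.card K) (finrank K V) _ _ Finite.one_lt_card (by positivity) ?_ ?_
        ((one_le_inv₀ (by positivity)).2 (pow_le_one₀ h0.le h1)) ?_
      · exact div_le_one_of_le₀ (by exact_mod_cast card_filter_le _ _) hN.le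
      · rw [div_mul_eq_mul_div, div_le_iff₀ hN]
        exact_mod_cast card_of_mem_flats hS ▸
          card_flats_filter_inter_mem_flats_mul_le (K := K) (k := k) (m := m) (S := S)
      · rw [inv_pow, ← pow_mul, ← pow_add, Nat.add_sub_cancel' hk]
        exact hθ.trans (by exact_mod_cast card_flats_le)
    rwa [div_mul_eq_mul_div, div_le_iff₀' hN] at hc

lemma eventually_prRandomSubset_not_exists_mem_flats_le (m : ℕ) {ε : ℝ} (hε : 0 < ε) :
    ∀ᶠ t : ℝ in atTop, ∀ (K V : Type*) [Field K] [Finite K] [AddCommGroup V] [Module K V]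
      [Fintype V] (θ : ℝ), m ≤ finrank K V → θ ≤ 1 →
      (#(flats K V m) / t) ^ (-(1 : ℝ) / (Nat.card K ^ m : ℕ)) < θ →
      prRandomSubset univ θ (fun A => ¬ ∃ S ∈ flats K V m, S ⊆ A) ≤ ε := by
  have hclass := (eventually_all_finset (range (m + 1))).2 fun k hk =>
    eventually_card_flats_filter_inter_mem_flats_mul_le (mem_range_succ_iff.1 hk)
      (show 0 < ε / (m + 1) by positivity)
  filter_upwards [hclass, eventually_gt_atTop 0] with t hclass ht K V _ _ _ _ _ θ hm h1 hθ
  classical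
  have hN : (0 : ℝ) < #(flats K V m) := by exact_mod_cast card_pos.2 (flats_nonempty hm)
  have h0 : 0 < θ := (Real.rpow_nonneg (by positivity) _).trans_lt hθ
  have hpow : (θ ^ Nat.card K ^ m)⁻¹ * t ≤ #(flats K V m) := by
    rw [← le_div_iff₀ ht]
    refine inv_le_of_inv_le₀ (by positivity) ?_
    rw [← rpow_neg_one_div_natCast_pow (by positivity) (pow_ne_zero m (Nat.card_pos (α := K)).ne')]
    exact pow_le_pow_left₀ (by positivity) hθ.le _
  have hsum : ∀ S ∈ flats K V m,
      ∑ T ∈ flats K V m, ((θ ^ #(S ∩ T))⁻¹ - 1) ≤ #(flats K V m) * ε := fun S hS => calc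
    _ ≤ _ := sum_inv_pow_card_inter_sub_one_le h0 h1 hS
    _ ≤ ∑ _k ∈ range (m + 1), #(flats K V m) * (ε / (m + 1)) :=
      sum_le_sum fun k hk => hclass k hk K V θ h0 h1 hpow S hS
    _ = #(flats K V m) * ε := by
      rw [sum_const, card_range, nsmul_eq_mul]
      push_cast
      field_simp
  refine le_of_mul_le_mul_right ?_ (by positivity : (0 : ℝ) < #(flats K V m) ^ 2)
  calc _ ≤ ∑ S ∈ flats K V m, ∑ T ∈ flats K V m, ((θ ^ #(S ∩ T))⁻¹ - 1) :=
        prRandomSubset_not_exists_subset_mul_card_sq_le h0 h1 fun S hS => card_of_mem_flats hS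
    _ ≤ ∑ _S ∈ flats K V m, #(flats K V m) * ε := sum_le_sum hsum
    _ = ε * #(flats K V m) ^ 2 := by
        rw [sum_const, nsmul_eq_mul]
        ring

end RandomFlats

theorem stmt11_general {ι : Type*} {l : Filter ι} (K V : ι → Type*) [∀ i, Field (K i)]
    [∀ i, Finite (K i)] [∀ i, AddCommGroup (V i)] [∀ i, Module (K i) (V i)] [∀ i, Fintype (V i)]
    (m : ℕ) (hm : ∀ i, m ≤ finrank (K i) (V i)) (t : ι → ℝ) (ht : Tendsto t l atTop)
    (θ : ι → ℝ) (hθ : ∀ i, 0 ≤ θ i ∧ θ i ≤ 1) :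
    ((∀ i, θ i < (Nat.card {S : Set (V i) // IsFlat (K i) m S} * t i)
        ^ (-(1 : ℝ) / (Nat.card (K i) ^ m : ℕ))) →
      Tendsto (fun i => prRandomSubset (univ : Finset (V i)) (θ i)
        (fun A => ∃ S : Set (V i), IsFlat (K i) m S ∧ S ⊆ A)) l (nhds 0)) ∧
    ((∀ i, (Nat.card {S : Set (V i) // IsFlat (K i) m S} / t i)
        ^ (-(1 : ℝ) / (Nat.card (K i) ^ m : ℕ)) < θ i) →
      Tendsto (fun i => prRandomSubset (univ : Finset (V i)) (θ i)
        (fun A => ∃ S : Set (V i), IsFlat (K i) m S ∧ S ⊆ A)) l (nhds 1)) := by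
  simp only [← exists_mem_flats_subset_iff, natCard_isFlat]
  refine ⟨fun hlow => ?_, fun hhigh => ?_⟩
  · refine squeeze_zero' (.of_forall fun i => prRandomSubset_univ_nonneg (hθ i).1 (hθ i).2 _) ?_
      (tendsto_inv_atTop_zero.comp ht)
    filter_upwards [ht.eventually_gt_atTop 0] with i hti
    exact prRandomSubset_exists_mem_flats_le (hθ i).1 (hθ i).2 hti (hlow i)
  · have hnot : Tendsto (fun i => prRandomSubset univ (θ i)
        (fun A => ¬ ∃ S ∈ flats (K i) (V i) m, S ⊆ A)) l (nhds 0) :=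
      tendsto_order.2 ⟨fun a ha => .of_forall fun i =>
        ha.trans_le (prRandomSubset_univ_nonneg (hθ i).1 (hθ i).2 _), fun a ha => by
        filter_upwards [ht.eventually (eventually_prRandomSubset_not_exists_mem_flats_le m
          (half_pos ha))] with i hi
        exact (hi (K i) (V i) (θ i) (hm i) (hθ i).2 (hhigh i)).trans_lt (half_lt_self ha)⟩
    simpa only [prRandomSubset_univ_not, sub_sub_cancel, sub_zero] using hnot.const_sub 1

theorem stmt11 (n q : ℕ → ℕ) (F : ℕ → Type) [∀ i, Field (F i)] [∀ i, Fintype (F i)]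
    (m : ℕ) (hmn : ∀ i, 2 * m < n i)
    (hq : ∀ i, Fintype.card (F i) = q i) (hqpp : ∀ i, IsPrimePow (q i))
    (hnq : Tendsto (fun i => n i + q i) atTop atTop)
    (t : ℕ → ℝ) (ht : Tendsto t atTop atTop)
    (θ : ℕ → ℝ) (hθ : ∀ i, 0 ≤ θ i ∧ θ i ≤ 1) :
    ((∀ i, θ i < ((Nat.card {S : Set (Fin (n i) → F i) // IsFlat (F i) m S} : ℝ) * t i)
        ^ (-(1 : ℝ) / ((q i ^ m : ℕ) : ℝ))) →
      Tendsto (fun i => prRandomSubset (Finset.univ : Finset (Fin (n i) → F i)) (θ i)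
        (fun A => ∃ S : Set (Fin (n i) → F i), IsFlat (F i) m S ∧
          S ⊆ (A : Set (Fin (n i) → F i)))) atTop (nhds 0)) ∧
    ((∀ i, ((Nat.card {S : Set (Fin (n i) → F i) // IsFlat (F i) m S} : ℝ) / t i)
        ^ (-(1 : ℝ) / ((q i ^ m : ℕ) : ℝ)) < θ i) →
      Tendsto (fun i => prRandomSubset (Finset.univ : Finset (Fin (n i) → F i)) (θ i)
        (fun A => ∃ S : Set (Fin (n i) → F i), IsFlat (F i) m S ∧
          S ⊆ (A : Set (Fin (n i) → F i)))) atTop (nhds 1)) := by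
  simpa only [Nat.card_eq_fintype_card, hq] using stmt11_general F (fun i => Fin (n i) → F i) m
    (fun i => by rw [finrank_fin_fun]; linarith [hmn i]) t ht θ hθ
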